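/- Let k and m be positive integers with m ≤ k and m even. An intersecting collection A of k-multisets on {1,…,m} satisfies |A| = |M_{(>m/2)}| + (1/2)·|M_{(m/2)}| if and only if A consists of all of M_{(>m/2)} together with a maximal intersecting subcollection of M_{(m/2)} (which has size (1/2)·|M_{(m/2)}|). -/

import Mathlib

/-!
Group the `k`-multisets by their support. An intersecting collection `A` never meets both the
multisets supported on `S` and those supported on `Sᶜ`. When `m ≤ k`, there are
`(k - 1).choose (k - #S)` multisets with support `S`, so a support with more than `m / 2` elements
carries strictly more multisets than its complement, and one with exactly `m / 2` elements carries
as many as its complement.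
Exchanging the members of `A` with small support for the multisets with complementary support
therefore strictly enlarges `A`, unless there are none to exchange, while `A` contains at most half
of the multisets whose support has size `m / 2`.
-/

open Finset

section ComplementaryFibers

variable {ι β : Type*} [Fintype ι] [DecidableEq β]

/-- The fibre of `f` over `b`. -/
def fiber (f : ι → β) (b : β) : Finset ι := {i | f i = b}

theorem card_le_sum_card_fiber (f : ι → β) (X : Finset ι) :
    #X ≤ ∑ b ∈ X.image f, #(fiber f b) := by
  rw [card_eq_sum_card_image f X]
  exact sum_le_sum fun b _ => card_le_card (filter_subset_filter _ (subset_univ X))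

variable [BooleanAlgebra β]

/-- The indices lying in a fibre larger than the fibre over the complementary value. -/
def heavyIndices (f : ι → β) : Finset ι := {i | #(fiber f (f i)ᶜ) < #(fiber f (f i))}

/-- The indices lying in a fibre of the same size as the fibre over the complementary value. -/
def balancedIndices (f : ι → β) : Finset ι := {i | #(fiber f (f i)ᶜ) = #(fiber f (f i))}

/-- The indices lying in a fibre smaller than the fibre over the complementary value. -/
def lightIndices (f : ι → β) : Finset ι := {i | #(fiber f (f i)) < #(fiber f (f i)ᶜ)}

/-- The indices whose value is the complement of the value of some index in `X`. An intersecting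
family can be compared with the opposite of any of its parts, which it does not meet. -/
def oppositeIndices (f : ι → β) (X : Finset ι) : Finset ι := {j | (f j)ᶜ ∈ X.image f}

variable {f : ι → β} {A X : Finset ι}

theorem disjoint_heavyIndices_balancedIndices (f : ι → β) :
    Disjoint (heavyIndices f) (balancedIndices f) :=
  disjoint_filter.2 fun _ _ => ne_of_lt

theorem card_oppositeIndices (f : ι → β) (X : Finset ι) :
    #(oppositeIndices f X) = ∑ b ∈ X.image f, #(fiber f bᶜ) := by
  rw [oppositeIndices, ← sum_card_fiberwise_eq_card_filter]
  refine sum_congr rfl fun b _ => congrArg card (filter_congr fun i _ => ?_)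
  rw [compl_eq_comm, eq_comm]

theorem card_le_card_oppositeIndices (hX : X ⊆ balancedIndices f) :
    #X ≤ #(oppositeIndices f X) := by
  refine (card_le_sum_card_fiber f X).trans_eq ?_
  rw [card_oppositeIndices]
  refine sum_congr rfl (forall_mem_image.2 fun i hi => ?_)
  exact (mem_filter.1 (hX hi)).2.symm

theorem card_lt_card_oppositeIndices (hX : X ⊆ lightIndices f) (hne : X.Nonempty) :
    #X < #(oppositeIndices f X) := by
  refine (card_le_sum_card_fiber f X).trans_lt ?_
  rw [card_oppositeIndices]
  refine sum_lt_sum_of_nonempty (hne.image f) (forall_mem_image.2 fun i hi => ?_)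
  exact (mem_filter.1 (hX hi)).2

theorem oppositeIndices_subset_balancedIndices (hX : X ⊆ balancedIndices f) :
    oppositeIndices f X ⊆ balancedIndices f := by
  intro j hj
  obtain ⟨i, hi, hij⟩ := mem_image.1 (mem_filter.1 hj).2
  have hbal := (mem_filter.1 (hX hi)).2
  rw [hij, compl_compl] at hbal
  exact mem_filter.2 ⟨mem_univ j, hbal.symm⟩

theorem oppositeIndices_subset_heavyIndices (hX : X ⊆ lightIndices f) :
    oppositeIndices f X ⊆ heavyIndices f := by
  intro j hj
  obtain ⟨i, hi, hij⟩ := mem_image.1 (mem_filter.1 hj).2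
  have hlight := (mem_filter.1 (hX hi)).2
  rw [hij, compl_compl] at hlight
  exact mem_filter.2 ⟨mem_univ j, hlight⟩

theorem disjoint_oppositeIndices (hA : (f '' A).Intersecting) (hX : X ⊆ A) :
    Disjoint A (oppositeIndices f X) := by
  rw [disjoint_left]
  intro j hjA hj
  obtain ⟨i, hi, hij⟩ := mem_image.1 (mem_filter.1 hj).2
  exact hA.compl_notMem (Set.mem_image_of_mem f hjA) (hij ▸ Set.mem_image_of_mem f (hX hi))

variable [DecidableEq ι]

theorem two_mul_card_inter_balancedIndices_le (hA : (f '' A).Intersecting) :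
    2 * #(A ∩ balancedIndices f) ≤ #(balancedIndices f) := by
  have hsub : A ∩ balancedIndices f ⊆ balancedIndices f := inter_subset_right
  have hsubA : A ∩ balancedIndices f ⊆ A := inter_subset_left
  have hdisj := (disjoint_oppositeIndices hA hsubA).mono_left hsubA
  calc 2 * #(A ∩ balancedIndices f)
      ≤ #(A ∩ balancedIndices f) + #(oppositeIndices f (A ∩ balancedIndices f)) := by
        rw [two_mul]
        exact Nat.add_le_add_left (card_le_card_oppositeIndices hsub) _
    _ = #(A ∩ balancedIndices f ∪ oppositeIndices f (A ∩ balancedIndices f)) :=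
        (card_union_of_disjoint hdisj).symm
    _ ≤ #(balancedIndices f) :=
        card_le_card (union_subset hsub (oppositeIndices_subset_balancedIndices hsub))

theorem card_inter_lightIndices_lt (hA : (f '' A).Intersecting)
    (hne : (A ∩ lightIndices f).Nonempty) :
    #(A ∩ lightIndices f) < #(heavyIndices f \ A) := by
  refine (card_lt_card_oppositeIndices inter_subset_right hne).trans_le (card_le_card ?_)
  exact subset_sdiff.2 ⟨oppositeIndices_subset_heavyIndices inter_subset_right,
    (disjoint_oppositeIndices hA inter_subset_left).symm⟩

theorem inter_heavyIndices_union_inter_balancedIndices (f : ι → β) (A : Finset ι) :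
    A ∩ heavyIndices f ∪ A ∩ balancedIndices f = A \ lightIndices f := by
  ext i
  simp only [heavyIndices, balancedIndices, lightIndices, mem_union, mem_inter, mem_sdiff,
    mem_filter, mem_univ, true_and, not_lt, ← and_or_left, le_iff_lt_or_eq]

theorem card_inter_heavyIndices_add_card_inter_balancedIndices (f : ι → β) (A : Finset ι) :
    #(A ∩ heavyIndices f) + #(A ∩ balancedIndices f) = #(A \ lightIndices f) := by
  rw [← inter_heavyIndices_union_inter_balancedIndices, card_union_of_disjoint]
  exact (disjoint_heavyIndices_balancedIndices f).mono inter_subset_right inter_subset_right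

theorem eq_heavyIndices_union_of_two_mul_card_eq (hA : (f '' A).Intersecting)
    (hcard : 2 * #A = 2 * #(heavyIndices f) + #(balancedIndices f)) :
    A = heavyIndices f ∪ A ∩ balancedIndices f := by
  have hsplit := card_inter_heavyIndices_add_card_inter_balancedIndices f A
  have hA_light := card_sdiff_add_card_inter A (lightIndices f)
  have hheavy_A := card_sdiff_add_card_inter (heavyIndices f) A
  rw [inter_comm] at hheavy_A
  have hbalanced := two_mul_card_inter_balancedIndices_le hA
  have hlight : A ∩ lightIndices f = ∅ := by
    by_contra! hne
    have hlt := card_inter_lightIndices_lt hA hne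
    omega
  have hheavy : heavyIndices f \ A = ∅ := by
    rw [hlight, card_empty] at hA_light
    rw [← card_eq_zero]
    omega
  calc A = A \ lightIndices f :=
        (sdiff_eq_self_of_disjoint (disjoint_iff_inter_eq_empty.2 hlight)).symm
    _ = A ∩ heavyIndices f ∪ A ∩ balancedIndices f :=
        (inter_heavyIndices_union_inter_balancedIndices f A).symm
    _ = heavyIndices f ∪ A ∩ balancedIndices f := by
        rw [inter_eq_right.2 (sdiff_eq_empty_iff_subset.1 hheavy)]

theorem two_mul_card_eq_iff_eq_heavyIndices_union (hA : (f '' A).Intersecting) :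
    2 * #A = 2 * #(heavyIndices f) + #(balancedIndices f) ↔
      ∃ B ⊆ balancedIndices f, 2 * #B = #(balancedIndices f) ∧ A = heavyIndices f ∪ B := by
  have two_mul_card_union {B : Finset ι} (hB : B ⊆ balancedIndices f) :
      2 * #(heavyIndices f ∪ B) = 2 * #(heavyIndices f) + 2 * #B := by
    rw [card_union_of_disjoint ((disjoint_heavyIndices_balancedIndices f).mono_right hB), mul_add]
  constructor
  · intro hcard
    have hunion := eq_heavyIndices_union_of_two_mul_card_eq hA hcard
    refine ⟨A ∩ balancedIndices f, inter_subset_right, ?_, hunion⟩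
    rw [hunion, two_mul_card_union inter_subset_right] at hcard
    exact Nat.add_left_cancel hcard
  · rintro ⟨B, hB, hcardB, rfl⟩
    rw [two_mul_card_union hB, hcardB]

end ComplementaryFibers

theorem choose_succ_lt_choose_of_le_two_mul {n r : ℕ} (hr : r ≤ n) (hn : n ≤ 2 * r) :
    n.choose (r + 1) < n.choose r := by
  refine lt_of_mul_lt_mul_right ?_ (r + 1).zero_le
  rw [Nat.choose_succ_right_eq]
  exact Nat.mul_lt_mul_of_pos_left (by omega) (Nat.choose_pos hr)

theorem choose_lt_choose_of_le_two_mul {n x y : ℕ} (hn : n ≤ 2 * x) (hx : x ≤ n) (hxy : x < y) :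
    n.choose y < n.choose x := by
  induction y, hxy using Nat.le_induction with
  | base => exact choose_succ_lt_choose_of_le_two_mul hx hn
  | succ y hxy ih =>
    rcases le_or_gt y n with hy | hy
    · exact (choose_succ_lt_choose_of_le_two_mul hy (by omega)).trans ih
    · rw [Nat.choose_eq_zero_of_lt (by omega)]
      exact Nat.choose_pos hx

theorem choose_lt_choose_of_lt_add {n x y : ℕ} (hx : x ≤ n) (hxy : x < y) (hn : n < x + y) :
    n.choose y < n.choose x := by
  rcases le_total n (2 * x) with h | h
  · exact choose_lt_choose_of_le_two_mul h hx hxy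
  · rw [← Nat.choose_symm hx]
    exact choose_lt_choose_of_le_two_mul (by omega) (by omega) (by omega)

section Multisets

variable {α : Type*} [DecidableEq α] {k : ℕ}

/-- The support of a `k`-multiset: the set of its distinct elements. -/
abbrev symSupport (s : Sym α k) : Finset α := (s : Multiset α).toFinset

theorem card_finset_sym (S : Finset α) (n : ℕ) : #(S.sym n) = (#S).multichoose n := by
  calc #(S.sym n) = #((S.attach.map (.subtype _)).sym n) := by rw [attach_map_val]
    _ = Fintype.card (Sym S n) := by
      rw [sym_map, card_map, ← univ_eq_attach, sym_univ, card_univ]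
    _ = (#S).multichoose n := by rw [Sym.card_sym_eq_multichoose, Fintype.card_coe]

theorem intersecting_image_symSupport {A : Finset (Sym α k)}
    (hA : ∀ s ∈ A, ∀ t ∈ A, ∃ x, x ∈ s ∧ x ∈ t) :
    (symSupport '' (A : Set (Sym α k))).Intersecting := by
  rintro _ ⟨s, hs, rfl⟩ _ ⟨t, ht, rfl⟩
  obtain ⟨x, hxs, hxt⟩ := hA s hs t ht
  exact not_disjoint_iff.2 ⟨x, Multiset.mem_toFinset.2 hxs, Multiset.mem_toFinset.2 hxt⟩

variable [Fintype α]

/-- Removing one copy of each element of `S` leaves an arbitrary multiset of size `k - #S`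
on `S`. -/
theorem card_fiber_symSupport_eq_card_sym {S : Finset α} (hS : #S ≤ k) :
    #(fiber (symSupport (k := k)) S) = #(S.sym (k - #S)) := by
  have hle {s : Sym α k} (hs : s ∈ fiber symSupport S) : S.val ≤ (s : Multiset α) := by
    rw [← (mem_filter.1 hs).2]
    exact Multiset.dedup_le _
  refine card_bij' (fun s hs => Sym.mk ((s : Multiset α) - S.val) ?_)
    (fun t _ => Sym.mk ((t : Multiset α) + S.val) ?_) ?_ ?_ ?_ ?_
  · rw [Multiset.card_sub (hle hs), Sym.card_coe, card_val]
  · rw [Multiset.card_add, Sym.card_coe, card_val, Nat.sub_add_cancel hS]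
  · intro s hs
    have hmem {x : α} (hx : x ∈ s) : x ∈ S := (mem_filter.1 hs).2 ▸ Multiset.mem_toFinset.2 hx
    exact mem_sym_iff.2 fun x hx => hmem (Multiset.mem_of_le tsub_le_self hx)
  · intro t ht
    refine mem_filter.2 ⟨mem_univ _, ?_⟩
    rw [symSupport, Sym.coe_mk, Multiset.toFinset_add, val_toFinset, union_eq_right]
    exact fun x hx => mem_sym_iff.1 ht x (Multiset.mem_toFinset.1 hx)
  · exact fun s hs => Sym.coe_injective (tsub_add_cancel_of_le (hle hs))
  · exact fun t _ => Sym.coe_injective (add_tsub_cancel_right _ _)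

theorem card_fiber_symSupport {S : Finset α} (hS : #S ≤ k) :
    #(fiber (symSupport (k := k)) S) = (k - 1).choose (k - #S) := by
  rw [card_fiber_symSupport_eq_card_sym hS, card_finset_sym, Nat.multichoose_eq,
    Nat.add_sub_cancel' hS]

theorem card_fiber_symSupport_compl_lt (hk : Fintype.card α ≤ k) {S : Finset α}
    (hS : Fintype.card α < 2 * #S) :
    #(fiber (symSupport (k := k)) Sᶜ) < #(fiber (symSupport (k := k)) S) := by
  have hle := S.card_le_univ
  have hcompl := S.card_compl
  rw [card_fiber_symSupport (hle.trans hk), card_fiber_symSupport (Sᶜ.card_le_univ.trans hk)]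
  exact choose_lt_choose_of_lt_add (by omega) (by omega) (by omega)

theorem card_fiber_symSupport_compl_eq (hk : Fintype.card α ≤ k) {S : Finset α}
    (hS : 2 * #S = Fintype.card α) :
    #(fiber (symSupport (k := k)) Sᶜ) = #(fiber (symSupport (k := k)) S) := by
  have hcompl : #Sᶜ = #S := by rw [card_compl]; omega
  rw [card_fiber_symSupport (S.card_le_univ.trans hk),
    card_fiber_symSupport (Sᶜ.card_le_univ.trans hk), hcompl]

theorem card_fiber_symSupport_lt_compl (hk : Fintype.card α ≤ k) {S : Finset α}
    (hS : 2 * #S < Fintype.card α) :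
    #(fiber (symSupport (k := k)) S) < #(fiber (symSupport (k := k)) Sᶜ) := by
  have hcompl : Fintype.card α < 2 * #Sᶜ := by rw [card_compl]; omega
  simpa only [compl_compl] using card_fiber_symSupport_compl_lt hk hcompl

theorem heavyIndices_symSupport (hk : Fintype.card α ≤ k) :
    heavyIndices (symSupport (α := α) (k := k)) =
      ({s | Fintype.card α < 2 * #(symSupport s)} : Finset (Sym α k)) := by
  refine filter_congr fun s _ => ⟨fun hlt => ?_, card_fiber_symSupport_compl_lt hk⟩
  by_contra! hs
  rcases hs.lt_or_eq with hs | hs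
  · exact hlt.asymm (card_fiber_symSupport_lt_compl hk hs)
  · exact hlt.ne (card_fiber_symSupport_compl_eq hk hs)

theorem balancedIndices_symSupport (hk : Fintype.card α ≤ k) :
    balancedIndices (symSupport (α := α) (k := k)) =
      ({s | 2 * #(symSupport s) = Fintype.card α} : Finset (Sym α k)) := by
  refine filter_congr fun s _ => ⟨fun heq => ?_, card_fiber_symSupport_compl_eq hk⟩
  by_contra! hs
  rcases hs.lt_or_gt with hs | hs
  · exact (card_fiber_symSupport_lt_compl hk hs).ne' heq
  · exact (card_fiber_symSupport_compl_lt hk hs).ne heq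

end Multisets

theorem stmt_6_general {α : Type*} [Fintype α] [DecidableEq α] {k : ℕ} (hk : Fintype.card α ≤ k)
    (A : Finset (Sym α k)) (hint : ∀ s ∈ A, ∀ t ∈ A, ∃ x : α, x ∈ s ∧ x ∈ t) :
    2 * #A = 2 * #{s : Sym α k | Fintype.card α < 2 * #(s : Multiset α).toFinset} +
        #{s : Sym α k | 2 * #(s : Multiset α).toFinset = Fintype.card α} ↔
      ∃ B : Finset (Sym α k),
        B ⊆ ({s | 2 * #(s : Multiset α).toFinset = Fintype.card α} : Finset (Sym α k)) ∧
        (∀ s ∈ B, ∀ t ∈ B, ∃ x : α, x ∈ s ∧ x ∈ t) ∧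
        2 * #B = #{s : Sym α k | 2 * #(s : Multiset α).toFinset = Fintype.card α} ∧
        A = ({s | Fintype.card α < 2 * #(s : Multiset α).toFinset} : Finset (Sym α k)) ∪ B := by
  rw [← heavyIndices_symSupport hk, ← balancedIndices_symSupport hk,
    two_mul_card_eq_iff_eq_heavyIndices_union (intersecting_image_symSupport hint)]
  refine exists_congr fun B => and_congr_right fun _ =>
    ⟨fun ⟨hcard, hA⟩ => ⟨fun s hs t ht => ?_, hcard, hA⟩, And.right⟩
  have hBA : B ⊆ A := hA ▸ subset_union_right
  exact hint s (hBA hs) t (hBA ht)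

/-- For `m ≤ k` with `m` even, an intersecting collection `A` of `k`-multisets on `{1,…,m}`
satisfies `|A| = |M_{(>m/2)}| + (1/2)·|M_{(m/2)}|` (stated multiplied through by 2)
iff `A` is `M_{(>m/2)}` together with a maximal intersecting subcollection of `M_{(m/2)}`
(one of size `(1/2)·|M_{(m/2)}|`). -/
theorem stmt_6 (k m : ℕ) (hk : 0 < k) (hm : 0 < m) (hmk : m ≤ k) (heven : Even m)
    (A : Finset (Sym (Fin m) k))
    (hint : ∀ s ∈ A, ∀ t ∈ A, ∃ x : Fin m, x ∈ s ∧ x ∈ t) :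
    (2 * A.card =
      2 * (Finset.univ.filter
        (fun s : Sym (Fin m) k => m < 2 * (s : Multiset (Fin m)).toFinset.card)).card +
      (Finset.univ.filter
        (fun s : Sym (Fin m) k => 2 * (s : Multiset (Fin m)).toFinset.card = m)).card) ↔
    (∃ B : Finset (Sym (Fin m) k),
      B ⊆ Finset.univ.filter
        (fun s : Sym (Fin m) k => 2 * (s : Multiset (Fin m)).toFinset.card = m) ∧
      (∀ s ∈ B, ∀ t ∈ B, ∃ x : Fin m, x ∈ s ∧ x ∈ t) ∧
      2 * B.card = (Finset.univ.filter
        (fun s : Sym (Fin m) k => 2 * (s : Multiset (Fin m)).toFinset.card = m)).card ∧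
      A = (Finset.univ.filter
        (fun s : Sym (Fin m) k => m < 2 * (s : Multiset (Fin m)).toFinset.card)) ∪ B) := by
  simpa only [Fintype.card_fin] using stmt_6_general ((Fintype.card_fin m).trans_le hmk) A hint
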